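/- arXiv:1906.01856 — 2 statements merged into one kernel-verified Lean document; each statement's English description precedes it below -/
import Mathlib

section
/- Let a, b, c be nonzero complex numbers with a + b + c = 0 such that b/a is not real (so the triangle with sides a, b, c is non-degenerate), and let φ_a ∈ ℝ satisfy Re(e^{iφ_a/2}·a) = 0. Then the function f(φ) = |Re(e^{iφ/2}·b)| − |Re(e^{iφ/2}·c)| vanishes at φ = φ_a and changes sign there: there exists ε > 0 such that for all 0 < δ < ε, f(φ_a − δ) and f(φ_a + δ) are nonzero and have opposite signs. -/
open Complex Real

/-!
Since `|u| - |v|` has the same sign as `(u + v) * (u - v)`, the difference of the projections of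
`b` and `c` has, up to the factor `-1`, the sign of the product of the projections of `a` and of
`b - c`. The first factor has a simple zero at the critical angle of `a`; the second does not vanish
there, because `(b - c) / a = 2 * (b / a) + 1` is not real.
-/

open scoped Topology

theorem sign_abs_sub_abs {R : Type*} [CommRing R] [LinearOrder R] [IsStrictOrderedRing R]
    (u v : R) :
    SignType.sign (|u| - |v|) = SignType.sign (u + v) * SignType.sign (u - v) := by
  rw [← sign_mul, ← sq_sub_sq]
  rcases lt_trichotomy |u| |v| with h | h | h
  · rw [sign_neg (sub_neg.2 h), sign_neg (sub_neg.2 (sq_lt_sq.2 h))]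
  · rw [sub_eq_zero.2 h, sub_eq_zero.2 ((sq_eq_sq_iff_abs_eq_abs u v).2 h)]
  · rw [sign_pos (sub_pos.2 h), sign_pos (sub_pos.2 (sq_lt_sq.2 h))]

theorem eventually_sign_eq_of_continuousAt {X R : Type*} [TopologicalSpace X] [Zero R]
    [LinearOrder R] [TopologicalSpace R] [OrderTopology R] {g : X → R} {x : X}
    (hg : ContinuousAt g x) (hx : g x ≠ 0) :
    ∀ᶠ y in 𝓝 x, SignType.sign (g y) = SignType.sign (g x) :=
  ((continuousAt_sign_of_ne_zero hx).comp hg).eventually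
    ((isOpen_discrete {SignType.sign (g x)}).mem_nhds rfl)

/-- A real function changes sign at `x` if its sign at all `y` near `x` is that of `y - x`, or at
all of them the opposite; the factor `s` records the direction of the change. Taking `y = x`, the
function vanishes at `x`. -/
def ChangesSignAt (f : ℝ → ℝ) (x : ℝ) : Prop :=
  ∃ s : SignType, s ≠ 0 ∧ ∀ᶠ y in 𝓝 x, SignType.sign (f y) = s * SignType.sign (y - x)

namespace ChangesSignAt

variable {f u v : ℝ → ℝ} {f' x : ℝ}

theorem of_hasDerivAt (hf : HasDerivAt f f' x) (hx : f x = 0) (hf' : f' ≠ 0) :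
    ChangesSignAt f x := by
  rcases hf'.lt_or_gt with hneg | hpos
  · refine ⟨-1, by decide, ?_⟩
    filter_upwards [eventually_nhdsWithin_sign_eq_of_deriv_neg (hf.deriv ▸ hneg) hx] with y hy
    rw [hy, ← neg_sub, Left.sign_neg, neg_one_mul]
  · refine ⟨1, one_ne_zero, ?_⟩
    filter_upwards [eventually_nhdsWithin_sign_eq_of_deriv_pos (hf.deriv ▸ hpos) hx] with y hy
    rw [hy, one_mul]

theorem abs_sub_abs (hadd : ChangesSignAt (fun y ↦ u y + v y) x)
    (hsub : ContinuousAt (fun y ↦ u y - v y) x) (hx : u x - v x ≠ 0) :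
    ChangesSignAt (fun y ↦ |u y| - |v y|) x := by
  obtain ⟨s, hs, hsign⟩ := hadd
  refine ⟨s * SignType.sign (u x - v x), mul_ne_zero hs (sign_ne_zero.2 hx), ?_⟩
  filter_upwards [hsign, eventually_sign_eq_of_continuousAt hsub hx] with y hy_add hy_sub
  rw [sign_abs_sub_abs, hy_add, hy_sub, mul_right_comm]

theorem apply_eq_zero (hf : ChangesSignAt f x) : f x = 0 := by
  obtain ⟨s, -, hsign⟩ := hf
  simpa using hsign.self_of_nhds

theorem exists_forall_mul_neg (hf : ChangesSignAt f x) :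
    ∃ ε > 0, ∀ δ, 0 < δ → δ < ε → f (x - δ) * f (x + δ) < 0 := by
  obtain ⟨s, hs, hsign⟩ := hf
  obtain ⟨ε, hε, hball⟩ := Metric.eventually_nhds_iff.1 hsign
  refine ⟨ε, hε, fun δ hδ hδε ↦ ?_⟩
  have hleft : SignType.sign (f (x - δ)) = -s := by
    rw [hball (by simpa [abs_of_pos hδ]), sub_sub_cancel_left, sign_neg (neg_neg_of_pos hδ),
      mul_neg_one]
  have hright : SignType.sign (f (x + δ)) = s := by
    rw [hball (by simpa [abs_of_pos hδ]), add_sub_cancel_left, sign_pos hδ, mul_one]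
  have neg_mul_self : ∀ t : SignType, t ≠ 0 → -t * t = -1 := by decide
  rw [← sign_eq_neg_one_iff, sign_mul, hleft, hright, neg_mul_self s hs]

end ChangesSignAt

/-- The signed length of the projection of the side `z`, rotated by the angle `φ / 2`, to the real
axis, as a linear form in `z`. For `z ≠ 0` it vanishes exactly at the angles `φ` congruent to the
critical angle of `z` modulo `2π`. -/
noncomputable def rotatedRe (φ : ℝ) : ℂ →ₗ[ℝ] ℝ :=
  reLm ∘ₗ LinearMap.mulLeft ℝ (Complex.exp (I * φ / 2))

theorem rotatedRe_apply (φ : ℝ) (z : ℂ) : rotatedRe φ z = (Complex.exp (I * φ / 2) * z).re :=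
  rfl

theorem hasDerivAt_rotatedRe (z : ℂ) (φ : ℝ) :
    HasDerivAt (fun ψ ↦ rotatedRe ψ z) (rotatedRe φ (I / 2 * z)) φ := by
  have hangle : HasDerivAt (fun w : ℂ ↦ I * w / 2) (I / 2) φ := by
    simpa only [id, mul_one] using! ((hasDerivAt_id (φ : ℂ)).const_mul I).div_const 2
  have hexp : HasDerivAt (fun w : ℂ ↦ Complex.exp (I * w / 2) * z)
      (Complex.exp (I * φ / 2) * (I / 2 * z)) φ := by
    simpa only [mul_assoc] using hangle.cexp.mul_const z
  exact hexp.real_of_complex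

theorem rotatedRe_ne_zero_of_im_div_ne_zero {w z : ℂ} {φ : ℝ} (hz : rotatedRe φ z = 0)
    (hwz : (w / z).im ≠ 0) : rotatedRe φ w ≠ 0 := by
  intro hw
  rw [rotatedRe_apply] at hz hw
  rw [← mul_div_mul_left w z (Complex.exp_ne_zero (I * φ / 2)), div_im, hz, hw] at hwz
  simp at hwz

theorem changesSignAt_rotatedRe {z : ℂ} {φ : ℝ} (hz : z ≠ 0) (hφ : rotatedRe φ z = 0) :
    ChangesSignAt (fun ψ ↦ rotatedRe ψ z) φ :=
  .of_hasDerivAt (hasDerivAt_rotatedRe z φ) hφ <|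
    rotatedRe_ne_zero_of_im_div_ne_zero hφ (by simp [hz])

/-- Sign-change assertion of the triangle lemma: for a non-degenerate triangle
`a + b + c = 0`, the difference of the lengths of the real-axis projections of
the rotated sides `b` and `c` vanishes at the critical angle of `a` and
changes sign there. -/
theorem sign_change_at_critical_angle (a b c : ℂ)
    (ha : a ≠ 0) (hb : b ≠ 0) (hc : c ≠ 0)
    (hsum : a + b + c = 0) (hnd : (b / a).im ≠ 0)
    (φa : ℝ) (hφa : (Complex.exp (Complex.I * (φa : ℂ) / 2) * a).re = 0) :
    (fun φ : ℝ => |(Complex.exp (Complex.I * (φ : ℂ) / 2) * b).re| -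
        |(Complex.exp (Complex.I * (φ : ℂ) / 2) * c).re|) φa = 0 ∧
    ∃ ε > 0, ∀ δ : ℝ, 0 < δ → δ < ε →
      (fun φ : ℝ => |(Complex.exp (Complex.I * (φ : ℂ) / 2) * b).re| -
          |(Complex.exp (Complex.I * (φ : ℂ) / 2) * c).re|) (φa - δ) ≠ 0 ∧
      (fun φ : ℝ => |(Complex.exp (Complex.I * (φ : ℂ) / 2) * b).re| -
          |(Complex.exp (Complex.I * (φ : ℂ) / 2) * c).re|) (φa + δ) ≠ 0 ∧
      (fun φ : ℝ => |(Complex.exp (Complex.I * (φ : ℂ) / 2) * b).re| -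
          |(Complex.exp (Complex.I * (φ : ℂ) / 2) * c).re|) (φa - δ) *
        (fun φ : ℝ => |(Complex.exp (Complex.I * (φ : ℂ) / 2) * b).re| -
          |(Complex.exp (Complex.I * (φ : ℂ) / 2) * c).re|) (φa + δ) < 0 := by
  have hadd : ChangesSignAt (fun φ ↦ rotatedRe φ b + rotatedRe φ c) φa := by
    have hneg : -a = b + c := by linear_combination -hsum
    simp only [← map_add, ← hneg]
    exact changesSignAt_rotatedRe (neg_ne_zero.2 ha) (by rw [map_neg, neg_eq_zero]; exact hφa)
  have hsub : rotatedRe φa b - rotatedRe φa c ≠ 0 := by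
    have hdiv : (b - c) / a = 2 * (b / a) + 1 := by
      field_simp
      linear_combination -hsum
    rw [← map_sub]
    exact rotatedRe_ne_zero_of_im_div_ne_zero hφa (by simpa [hdiv] using hnd)
  have hcont : ContinuousAt (fun φ ↦ rotatedRe φ b - rotatedRe φ c) φa :=
    ((hasDerivAt_rotatedRe b φa).sub (hasDerivAt_rotatedRe c φa)).continuousAt
  have hsign : ChangesSignAt (fun φ ↦ |rotatedRe φ b| - |rotatedRe φ c|) φa :=
    hadd.abs_sub_abs hcont hsub
  obtain ⟨ε, hε, hmul⟩ := hsign.exists_forall_mul_neg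
  refine ⟨hsign.apply_eq_zero, ε, hε, fun δ hδ hδε ↦ ?_⟩
  have hlt := hmul δ hδ hδε
  exact ⟨left_ne_zero_of_mul hlt.ne, right_ne_zero_of_mul hlt.ne, hlt⟩
end

section
/- Let A, B, C be 2×2 complex matrices of determinant 1. Set a = tr A, b = tr B, c = tr C, d = tr(ABC), and x = tr(AB), y = tr(BC), z = tr(CA). Then x·y·z + x² + y² + z² − (ab + cd)·x − (bc + ad)·y − (ca + bd)·z + (a² + b² + c² + d² + abcd − 4) = 0. -/
open Matrix

/-!
The numbers `tr(ABC)` and `tr(ACB)` are the two roots of a monic quadratic whose coefficients are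
polynomials in the traces of `A`, `B`, `C`, `AB`, `BC`, `CA`; the identity says that `tr(ABC)` is a
root. For `2 × 2` matrices `adj M = tr M - M`, so `tr U * tr V = tr(UV) + tr(U adj V)`.
The sum of the roots comes from expanding `adj(BC) = adj C * adj B`. For their product, take
`U = ABC` and `V = BAC`, so that `tr V = tr(ACB)`: the factors `C` in `U adj V` collapse to `det C`,
leaving the trace of a commutator, and `tr(UV)` is reduced by Cayley–Hamilton in the form
`M N M = tr(MN) M - det M adj N`. For determinants other than `1`, the factors `det A`, `det B`,
`det C` make the identity homogeneous in each matrix.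
-/

theorem trace_mul_adjugate_self {n R : Type*} [Fintype n] [DecidableEq n] [CommRing R]
    (A : Matrix n n R) : (A * A.adjugate).trace = Fintype.card n * A.det := by
  rw [mul_adjugate, trace_smul, trace_one, smul_eq_mul, mul_comm]

section FinTwo

variable {R : Type*} [CommRing R] (A B C : Matrix (Fin 2) (Fin 2) R)

theorem adjugate_eq_trace_smul_one_sub_fin_two : A.adjugate = A.trace • 1 - A := by
  rw [adjugate_fin_two, trace_fin_two]
  ext i j
  fin_cases i <;> fin_cases j <;> simp

theorem trace_adjugate_fin_two : A.adjugate.trace = A.trace := by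
  rw [adjugate_fin_two, trace_fin_two_of, trace_fin_two, add_comm]

theorem trace_mul_adjugate_fin_two :
    (A * B.adjugate).trace = A.trace * B.trace - (A * B).trace := by
  rw [adjugate_eq_trace_smul_one_sub_fin_two, mul_sub, mul_smul_comm, mul_one, trace_sub,
    trace_smul, smul_eq_mul, mul_comm]

theorem mul_mul_same_fin_two :
    A * B * A = (A * B).trace • A - A.det • B.adjugate := by
  calc A * B * A = ((A * B).trace • 1 - (A * B).adjugate) * A := by
        rw [adjugate_eq_trace_smul_one_sub_fin_two, sub_sub_cancel]
    _ = (A * B).trace • A - B.adjugate * (A.adjugate * A) := by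
        rw [adjugate_mul_distrib, sub_mul, smul_mul_assoc, one_mul, mul_assoc]
    _ = (A * B).trace • A - A.det • B.adjugate := by
        rw [adjugate_mul, mul_smul_comm, mul_one]

theorem trace_mul_mul_same_mul_fin_two :
    (A * B * A * C).trace =
      (A * B).trace * (A * C).trace - A.det * (B.trace * C.trace - (B * C).trace) := by
  rw [mul_mul_same_fin_two, sub_mul, smul_mul_assoc, smul_mul_assoc, trace_sub, trace_smul,
    trace_smul, smul_eq_mul, smul_eq_mul, trace_mul_comm B.adjugate, trace_mul_adjugate_fin_two,
    trace_mul_comm C, mul_comm C.trace]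

theorem mul_add_mul_swap_fin_two :
    A * B + B * A =
      A.trace • B + B.trace • A + ((A * B).trace - A.trace * B.trace) • 1 := by
  have h : (A * B).trace • 1 - A * B = (B.trace • 1 - B) * (A.trace • 1 - A) := by
    simp only [← adjugate_eq_trace_smul_one_sub_fin_two, adjugate_mul_distrib]
  simp only [sub_mul, mul_sub, smul_mul_assoc, mul_smul_comm, mul_one, one_mul] at h
  linear_combination (norm := module) -h

theorem trace_mul_mul_adjugate_mul_adjugate_fin_two :
    (A * B * A.adjugate * B.adjugate).trace =
      B.det * A.trace ^ 2 + A.det * B.trace ^ 2 + (A * B).trace ^ 2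
        - A.trace * B.trace * (A * B).trace - 2 * A.det * B.det := by
  have conj : (A * B * A.adjugate).trace = A.det * B.trace := by
    rw [trace_mul_cycle, adjugate_mul, smul_mul_assoc, one_mul, trace_smul, smul_eq_mul]
  have sandwich : (A * B * A.adjugate * B).trace =
      (A * B).trace * (A.trace * B.trace - (A * B).trace) -
        B.det * (A.trace ^ 2 - 2 * A.det) := by
    calc (A * B * A.adjugate * B).trace = (B * A * B * A.adjugate).trace := by
          rw [trace_mul_comm]; simp only [mul_assoc]
      _ = _ := by
          rw [trace_mul_mul_same_mul_fin_two, trace_mul_adjugate_fin_two, trace_mul_adjugate_self,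
            trace_adjugate_fin_two, Fintype.card_fin, trace_mul_comm B A]
          push_cast
          ring
  rw [trace_mul_adjugate_fin_two, conj, sandwich]
  ring

theorem trace_mul_mul_add_trace_mul_mul_swap_fin_two :
    (A * B * C).trace + (A * C * B).trace =
      C.trace * (A * B).trace + A.trace * (B * C).trace + B.trace * (C * A).trace
        - A.trace * B.trace * C.trace := by
  have h := congrArg (fun M ↦ (A * M).trace) (mul_add_mul_swap_fin_two B C)
  simp only [mul_add, mul_smul_comm, mul_one, trace_add, trace_smul, smul_eq_mul, ← mul_assoc] at h
  linear_combination h + B.trace * trace_mul_comm A C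

theorem trace_mul_mul_mul_swap_mul_fin_two :
    (A * B * C * (B * A * C)).trace =
      (A * B).trace * (B * C).trace * (C * A).trace
        - A.det * (B * C).trace * (B.trace * C.trace - (B * C).trace)
        - B.det * (C * A).trace * (C.trace * A.trace - (C * A).trace)
        + A.det * B.det * (C.trace ^ 2 - 2 * C.det) := by
  have hABAC : (A * B * A * C).trace = (A * B).trace * (C * A).trace -
      A.det * (B.trace * C.trace - (B * C).trace) := by
    rw [trace_mul_mul_same_mul_fin_two, trace_mul_comm A C]
  have hACAC : (A * C.adjugate * A * C).trace =
      (C * A).trace * (C.trace * A.trace - (C * A).trace) -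
        A.det * (C.trace ^ 2 - 2 * C.det) := by
    rw [trace_mul_mul_same_mul_fin_two, trace_mul_adjugate_fin_two, trace_adjugate_fin_two,
      trace_mul_comm C.adjugate, trace_mul_adjugate_self, Fintype.card_fin, trace_mul_comm A C]
    push_cast
    ring
  have hBCB : A * B * C * (B * A * C) =
      (B * C).trace • (A * B * A * C) - B.det • (A * C.adjugate * A * C) := by
    calc A * B * C * (B * A * C) = A * (B * C * B) * A * C := by simp only [mul_assoc]
      _ = _ := by
        rw [mul_mul_same_fin_two B C]
        simp only [mul_sub, sub_mul, mul_smul_comm, smul_mul_assoc]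
  rw [hBCB, trace_sub, trace_smul, trace_smul, hABAC, hACAC, smul_eq_mul, smul_eq_mul]
  ring

theorem trace_mul_mul_mul_trace_mul_mul_swap_fin_two :
    (A * B * C).trace * (A * C * B).trace =
      (A * B).trace * (B * C).trace * (C * A).trace
        + C.det * (A * B).trace ^ 2 + A.det * (B * C).trace ^ 2 + B.det * (C * A).trace ^ 2
        - C.det * (A.trace * B.trace) * (A * B).trace
        - A.det * (B.trace * C.trace) * (B * C).trace
        - B.det * (C.trace * A.trace) * (C * A).trace
        + B.det * C.det * A.trace ^ 2 + A.det * C.det * B.trace ^ 2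
        + A.det * B.det * C.trace ^ 2 - 4 * A.det * B.det * C.det := by
  have commutator : (A * B * C * (B * A * C).adjugate).trace =
      C.det * (A * B * A.adjugate * B.adjugate).trace := by
    calc (A * B * C * (B * A * C).adjugate).trace
        = (A * B * (C * C.adjugate) * A.adjugate * B.adjugate).trace := by
          simp only [adjugate_mul_distrib, mul_assoc]
      _ = _ := by
          rw [mul_adjugate, mul_smul_comm, mul_one, smul_mul_assoc, smul_mul_assoc, trace_smul,
            smul_eq_mul]
  rw [trace_mul_mul_adjugate_mul_adjugate_fin_two, trace_mul_adjugate_fin_two,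
    trace_mul_mul_mul_swap_mul_fin_two] at commutator
  rw [trace_mul_cycle A C B]
  linear_combination commutator

theorem fricke_klein_identity_general :
    (A * B).trace * (B * C).trace * (C * A).trace
      + C.det * (A * B).trace ^ 2 + A.det * (B * C).trace ^ 2 + B.det * (C * A).trace ^ 2
      - (C.det * (A.trace * B.trace) + C.trace * (A * B * C).trace) * (A * B).trace
      - (A.det * (B.trace * C.trace) + A.trace * (A * B * C).trace) * (B * C).trace
      - (B.det * (C.trace * A.trace) + B.trace * (A * B * C).trace) * (C * A).trace
      + (B.det * C.det * A.trace ^ 2 + A.det * C.det * B.trace ^ 2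
        + A.det * B.det * C.trace ^ 2 + (A * B * C).trace ^ 2
        + A.trace * B.trace * C.trace * (A * B * C).trace - 4 * A.det * B.det * C.det) = 0 := by
  have sum_roots := trace_mul_mul_add_trace_mul_mul_swap_fin_two A B C
  have prod_roots := trace_mul_mul_mul_trace_mul_mul_swap_fin_two A B C
  linear_combination (A * B * C).trace * sum_roots - prod_roots

end FinTwo

/-- The Fricke–Klein trace identity for a triple of `SL(2, ℂ)` matrices:
with `a = tr A`, `b = tr B`, `c = tr C`, `d = tr(ABC)`, `x = tr(AB)`,
`y = tr(BC)`, `z = tr(CA)`, one has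
`xyz + x² + y² + z² − (ab+cd)x − (bc+ad)y − (ca+bd)z + (a²+b²+c²+d²+abcd−4) = 0`. -/
theorem fricke_klein_identity (A B C : Matrix (Fin 2) (Fin 2) ℂ)
    (hA : A.det = 1) (hB : B.det = 1) (hC : C.det = 1) :
    Matrix.trace (A * B) * Matrix.trace (B * C) * Matrix.trace (C * A) +
      (Matrix.trace (A * B)) ^ 2 + (Matrix.trace (B * C)) ^ 2 +
      (Matrix.trace (C * A)) ^ 2 -
      (Matrix.trace A * Matrix.trace B + Matrix.trace C * Matrix.trace (A * B * C)) *
        Matrix.trace (A * B) -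
      (Matrix.trace B * Matrix.trace C + Matrix.trace A * Matrix.trace (A * B * C)) *
        Matrix.trace (B * C) -
      (Matrix.trace C * Matrix.trace A + Matrix.trace B * Matrix.trace (A * B * C)) *
        Matrix.trace (C * A) +
      ((Matrix.trace A) ^ 2 + (Matrix.trace B) ^ 2 + (Matrix.trace C) ^ 2 +
        (Matrix.trace (A * B * C)) ^ 2 +
        Matrix.trace A * Matrix.trace B * Matrix.trace C * Matrix.trace (A * B * C) - 4)
      = 0 := by
  simpa [hA, hB, hC] using fricke_klein_identity_general A B C
end
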